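/- The series Σ_{k=0}^∞ (−1/1024)^k · ((1)_k)^5 / ((3/2)_k)^5 · (205k² + 250k + 77) converges and equals 64ζ(3), where ζ(3) = Σ_{m=1}^∞ 1/m³ is Apéry's constant. -/

import Mathlib

/-!
The proof is by the Wilf–Zeilberger method. There are hypergeometric terms `F n k` (`wzF`) and
`G n k` (`wzG`) with

* `F (n+1) k - F n k = G n (k+1) - G n k` (`wz_relation`),
* `F 0 k = 2 / (k+1)^3`,
* `32 * G n 0` equal to the `n`-th term of the series (`term_eq`).

Put `S n = ∑' k, F n k`. Since `G n k → 0` as `k → ∞`, summing the relation over `k` gives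
`S n - S (n+1) = G n 0` (`S_sub`). The ratio bound `|F (n+1) k| ≤ (5/64) |F n k|` yields
`|F n k| ≤ (5/64)^n * 2/(k+1)^3`, so `S n → 0` geometrically; hence `∑ G n 0` converges
absolutely and telescopes to `S 0 = 2 ζ(3)`. Multiplying by `32` gives the result.

The pair comes from a well-poised series `∑ (a+2k) ∏ (b)_k / (1+a-b)_k`, taken over four equal
parameters `b`, with `a = 3n+2` and `b = n+1`; the polynomial `wzP` is then the solution of a
linear system in its coefficients.
-/

/-- The Pochhammer symbol `(x)_k = x (x+1) ⋯ (x+k-1) = Γ(x+k)/Γ(x)`. -/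
noncomputable def poch (x : ℝ) (k : ℕ) : ℝ := ∏ i ∈ Finset.range k, (x + i)

open Filter Topology Nat

/-! ### The WZ pair -/

/-- The polynomial factor of the WZ companion `wzG`, written by powers of `k`. -/
def wzP (n k : ℝ) : ℝ :=
  (n + 1) ^ 5 * (205 * n ^ 2 + 250 * n + 77)
  + (254 + 1780 * n + 5154 * n ^ 2 + 7896 * n ^ 3 + 6754 * n ^ 4 + 3060 * n ^ 5 + 574 * n ^ 6) * k
  + (344 + 1992 * n + 4576 * n ^ 2 + 5216 * n ^ 3 + 2952 * n ^ 4 + 664 * n ^ 5) * k ^ 2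
  + (248 + 1136 * n + 1936 * n ^ 2 + 1456 * n ^ 3 + 408 * n ^ 4) * k ^ 3
  + (101 + 341 * n + 381 * n ^ 2 + 141 * n ^ 3) * k ^ 4
  + (22 + 48 * n + 26 * n ^ 2) * k ^ 5 + (2 + 2 * n) * k ^ 6

/-- The WZ summand: `(-1)^n n!^6 / (2n)! * ((n+k)! / (2n+k+1)!)^4 * (3n+2k+2)`. -/
noncomputable def wzF (n k : ℕ) : ℝ :=
  (-1) ^ n * (n ! : ℝ) ^ 6 / ((2 * n)! : ℝ) * (((n + k)! : ℝ) / ((2 * n + k + 1)! : ℝ)) ^ 4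
    * (3 * n + 2 * k + 2)

/-- The WZ companion of `wzF`:
`(-1)^n n!^6 / (2n+2)! * ((n+k)! / (2n+k+2)!)^4 * wzP n k`. -/
noncomputable def wzG (n k : ℕ) : ℝ :=
  (-1) ^ n * (n ! : ℝ) ^ 6 / ((2 * n + 2)! : ℝ) * (((n + k)! : ℝ) / ((2 * n + k + 2)! : ℝ)) ^ 4
    * wzP n k

lemma fact_succ_real (m : ℕ) : ((m + 1)! : ℝ) = (m + 1) * (m ! : ℝ) := by
  rw [Nat.factorial_succ]; push_cast; ring

lemma fact_pos_real (m : ℕ) : (0 : ℝ) < (m ! : ℝ) := by exact_mod_cast Nat.factorial_pos m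

/-- The ratio `F (n+1) k / F n k`, cleared of denominators. -/
lemma wzF_succ (n k : ℕ) : wzF (n + 1) k * ((2 * n + 1) * (2 * n + 2) *
    ((2 * n + k + 2) * (2 * n + k + 3)) ^ 4 * (3 * n + 2 * k + 2)) =
    - (wzF n k * ((n + 1) ^ 6 * (n + k + 1) ^ 4 * (3 * n + 2 * k + 5))) := by
  unfold wzF
  rw [show 2 * (n + 1) = 2 * n + 1 + 1 by ring, show n + 1 + k = n + k + 1 by ring,
    show 2 * n + 1 + 1 + k + 1 = 2 * n + k + 1 + 1 + 1 by ring]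
  simp only [fact_succ_real]
  have h1 := (fact_pos_real n).ne'
  have h2 := (fact_pos_real (2 * n)).ne'
  have h3 := (fact_pos_real (n + k)).ne'
  have h4 := (fact_pos_real (2 * n + k)).ne'
  push_cast
  generalize (n ! : ℝ) = a at *
  generalize ((2 * n)! : ℝ) = b at *
  generalize ((n + k)! : ℝ) = c at *
  generalize ((2 * n + k)! : ℝ) = d at *
  have e1 : (2 * (n : ℝ) + 1) ≠ 0 := by positivity
  have e2 : (2 * (n : ℝ) + 1 + 1) ≠ 0 := by positivity
  have e3 : (2 * (n : ℝ) + k + 1) ≠ 0 := by positivity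
  have e4 : (2 * (n : ℝ) + k + 1 + 1) ≠ 0 := by positivity
  have e5 : (2 * (n : ℝ) + k + 1 + 1 + 1) ≠ 0 := by positivity
  rw [pow_succ]
  field_simp
  ring

/-- The ratio `G n k / F n k`, cleared of denominators. -/
lemma wzG_eq (n k : ℕ) : wzG n k * ((2 * n + 1) * (2 * n + 2) *
    (2 * n + k + 2) ^ 4 * (3 * n + 2 * k + 2)) = wzF n k * wzP n k := by
  unfold wzF wzG
  simp only [fact_succ_real]
  have h1 := (fact_pos_real n).ne'
  have h2 := (fact_pos_real (2 * n)).ne'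
  have h3 := (fact_pos_real (n + k)).ne'
  have h4 := (fact_pos_real (2 * n + k)).ne'
  push_cast
  generalize wzP (n : ℝ) k = p
  generalize (n ! : ℝ) = a at *
  generalize ((2 * n)! : ℝ) = b at *
  generalize ((n + k)! : ℝ) = c at *
  generalize ((2 * n + k)! : ℝ) = d at *
  have e1 : (2 * (n : ℝ) + 1) ≠ 0 := by positivity
  have e2 : (2 * (n : ℝ) + 1 + 1) ≠ 0 := by positivity
  have e3 : (2 * (n : ℝ) + k + 1) ≠ 0 := by positivity
  have e4 : (2 * (n : ℝ) + k + 1 + 1) ≠ 0 := by positivity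
  field_simp
  ring

/-- The ratio `G n (k+1) / F n k`, cleared of denominators. -/
lemma wzG_succ_eq (n k : ℕ) : wzG n (k + 1) * ((2 * n + 1) * (2 * n + 2) *
    ((2 * n + k + 2) * (2 * n + k + 3)) ^ 4 * (3 * n + 2 * k + 2)) =
    wzF n k * ((n + k + 1) ^ 4 * wzP n (k + 1)) := by
  unfold wzF wzG
  rw [show n + (k + 1) = n + k + 1 by ring,
    show 2 * n + (k + 1) + 2 = 2 * n + k + 1 + 1 + 1 by ring]
  simp only [fact_succ_real]
  have h1 := (fact_pos_real n).ne'
  have h2 := (fact_pos_real (2 * n)).ne'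
  have h3 := (fact_pos_real (n + k)).ne'
  have h4 := (fact_pos_real (2 * n + k)).ne'
  push_cast
  generalize wzP (n : ℝ) ((k : ℝ) + 1) = p
  generalize (n ! : ℝ) = a at *
  generalize ((2 * n)! : ℝ) = b at *
  generalize ((n + k)! : ℝ) = c at *
  generalize ((2 * n + k)! : ℝ) = d at *
  have e1 : (2 * (n : ℝ) + 1) ≠ 0 := by positivity
  have e2 : (2 * (n : ℝ) + 1 + 1) ≠ 0 := by positivity
  have e3 : (2 * (n : ℝ) + k + 1) ≠ 0 := by positivity
  have e4 : (2 * (n : ℝ) + k + 1 + 1) ≠ 0 := by positivity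
  have e5 : (2 * (n : ℝ) + k + 1 + 1 + 1) ≠ 0 := by positivity
  field_simp
  ring

/-- The polynomial identity to which the WZ relation reduces after division by `wzF n k`. -/
lemma wzP_identity (n k : ℝ) :
    -((n + 1) ^ 6 * (n + k + 1) ^ 4 * (3 * n + 2 * k + 5))
      - (2 * n + 1) * (2 * n + 2) * ((2 * n + k + 2) * (2 * n + k + 3)) ^ 4 * (3 * n + 2 * k + 2)
    = (n + k + 1) ^ 4 * wzP n (k + 1) - (2 * n + k + 3) ^ 4 * wzP n k := by
  unfold wzP
  ring

lemma wz_relation (n k : ℕ) :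
    wzF (n + 1) k - wzF n k = wzG n (k + 1) - wzG n k := by
  have hD : ((2 * (n : ℝ) + 1) * (2 * n + 2) *
    ((2 * n + k + 2) * (2 * n + k + 3)) ^ 4 * (3 * n + 2 * k + 2)) ≠ 0 := by positivity
  apply mul_right_cancel₀ hD
  have h1 := wzF_succ n k
  have h2 := wzG_eq n k
  have h3 := wzG_succ_eq n k
  have h4 := wzP_identity n k
  linear_combination h1 - h3 + (2 * (n : ℝ) + k + 3) ^ 4 * h2 + wzF n k * h4

/-! ### Bounds on the pair -/

/-- The ratio is at most `(n+1)^2/((2n+1)(2n+2)) * ((n+1)/(2n+k+2))^4 * (3n+2k+5)/(3n+2k+2)`,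
whose factors are bounded by `1/2`, `1/16` and `5/2`. -/
lemma wzF_ratio (n k : ℕ) : |wzF (n + 1) k| ≤ 5 / 64 * |wzF n k| := by
  have hn : (0 : ℝ) ≤ n := n.cast_nonneg
  have hk : (0 : ℝ) ≤ k := k.cast_nonneg
  have hD : (0 : ℝ) < ((2 * (n : ℝ) + 1) * (2 * n + 2) *
    ((2 * n + k + 2) * (2 * n + k + 3)) ^ 4 * (3 * n + 2 * k + 2)) := by positivity
  have hN : (0 : ℝ) ≤ ((n : ℝ) + 1) ^ 6 * (n + k + 1) ^ 4 * (3 * n + 2 * k + 5) := by positivity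
  have h := congrArg abs (wzF_succ n k)
  rw [abs_neg, abs_mul, abs_mul (wzF n k), abs_of_pos hD, abs_of_nonneg hN] at h
  apply le_of_mul_le_mul_right _ hD
  rw [h, mul_comm (5 / 64 : ℝ), mul_assoc |wzF n k| (5 / 64)]
  refine mul_le_mul_of_nonneg_left ?_ (abs_nonneg (wzF n k))
  clear h hD hN
  generalize (n : ℝ) = x at *
  generalize (k : ℝ) = y at *
  have a1 : 2 * (x + 1) ^ 2 ≤ (2 * x + 1) * (2 * x + 2) := by nlinarith
  have a2 : 16 * (x + 1) ^ 4 ≤ (2 * x + y + 2) ^ 4 := by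
    calc 16 * (x + 1) ^ 4 = (2 * x + 2) ^ 4 := by ring
      _ ≤ _ := by gcongr; linarith
  have a3 : (x + y + 1) ^ 4 ≤ (2 * x + y + 3) ^ 4 := by gcongr <;> linarith
  have a4 : 2 * (3 * x + 2 * y + 5) ≤ 5 * (3 * x + 2 * y + 2) := by linarith
  calc (x + 1) ^ 6 * (x + y + 1) ^ 4 * (3 * x + 2 * y + 5)
      = 1 / 64 * ((2 * (x + 1) ^ 2) * (16 * (x + 1) ^ 4) * (x + y + 1) ^ 4
          * (2 * (3 * x + 2 * y + 5))) := by ring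
    _ ≤ 1 / 64 * (((2 * x + 1) * (2 * x + 2)) * (2 * x + y + 2) ^ 4 * (2 * x + y + 3) ^ 4
          * (5 * (3 * x + 2 * y + 2))) := by gcongr
    _ = _ := by ring

lemma wzF_zero (k : ℕ) : wzF 0 k = 2 * (1 / ((k : ℝ) + 1) ^ 3) := by
  unfold wzF
  have h := (fact_pos_real k).ne'
  have e : (k : ℝ) + 1 ≠ 0 := by positivity
  simp [fact_succ_real]
  field_simp

lemma wzF_bound (n k : ℕ) : |wzF n k| ≤ (5 / 64) ^ n * (2 * (1 / ((k : ℝ) + 1) ^ 3)) := by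
  induction n with
  | zero =>
    rw [wzF_zero, abs_of_nonneg (by positivity)]; simp
  | succ n ih =>
    calc _ ≤ 5 / 64 * |wzF n k| := wzF_ratio n k
      _ ≤ 5 / 64 * ((5 / 64) ^ n * (2 * (1 / ((k : ℝ) + 1) ^ 3))) := by gcongr
      _ = _ := by ring

lemma summable_cubes : Summable (fun k : ℕ => 2 * (1 / ((k : ℝ) + 1) ^ 3)) := by
  have h := (summable_nat_add_iff 1).mpr
    (Real.summable_one_div_nat_pow.mpr (by norm_num : 1 < 3))
  simpa using h.mul_left 2

lemma wzF_summable (n : ℕ) : Summable (wzF n) :=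
  Summable.of_norm_bounded (summable_cubes.mul_left _) (wzF_bound n)

/-- Holds since `wzP n k` has degree `6` in `k` with nonnegative coefficients, while
`(n+k)! / (2n+k+2)! ≤ 1 / (k+1)^2` enters to the fourth power. -/
lemma wzG_bound (n k : ℕ) : |wzG n k| ≤
    (n ! : ℝ) ^ 6 / ((2 * n + 2)! : ℝ) * wzP n 1 * (1 / ((k : ℝ) + 1)) := by
  have hn : (0 : ℝ) ≤ n := n.cast_nonneg
  have hk : (0 : ℝ) ≤ k := k.cast_nonneg
  have hP0 : 0 ≤ wzP n k := by unfold wzP; positivity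
  have hP1 : 0 ≤ wzP n 1 := by unfold wzP; positivity
  have hP : wzP n k ≤ wzP n 1 * ((k : ℝ) + 1) ^ 6 := by
    have key : ∀ i ≤ 6, (k : ℝ) ^ i ≤ ((k : ℝ) + 1) ^ 6 := fun i hi =>
      (pow_le_pow_left₀ hk (by linarith) i).trans (pow_le_pow_right₀ (by linarith) hi)
    have k0 := key 0 (by norm_num)
    have k1 := key 1 (by norm_num)
    have k2 := key 2 (by norm_num)
    have k3 := key 3 (by norm_num)
    have k4 := key 4 (by norm_num)
    have k5 := key 5 (by norm_num)
    have k6 := key 6 (by norm_num)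
    rw [pow_zero] at k0
    rw [pow_one] at k1
    unfold wzP
    generalize ((k : ℝ) + 1) ^ 6 = Y at *
    rw [← mul_one ((n + 1 : ℝ) ^ 5 * (205 * (n : ℝ) ^ 2 + 250 * n + 77))]
    -- each monomial `k ^ i` is replaced by `Y = (k + 1) ^ 6`
    refine (?_ : _ ≤ ((n + 1 : ℝ) ^ 5 * (205 * (n : ℝ) ^ 2 + 250 * n + 77)) * Y
      + (254 + 1780 * (n : ℝ) + 5154 * n ^ 2 + 7896 * n ^ 3 + 6754 * n ^ 4 + 3060 * n ^ 5
        + 574 * n ^ 6) * Y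
      + (344 + 1992 * (n : ℝ) + 4576 * n ^ 2 + 5216 * n ^ 3 + 2952 * n ^ 4 + 664 * n ^ 5) * Y
      + (248 + 1136 * (n : ℝ) + 1936 * n ^ 2 + 1456 * n ^ 3 + 408 * n ^ 4) * Y
      + (101 + 341 * (n : ℝ) + 381 * n ^ 2 + 141 * n ^ 3) * Y
      + (22 + 48 * (n : ℝ) + 26 * n ^ 2) * Y + (2 + 2 * (n : ℝ)) * Y).trans (le_of_eq (by ring))
    gcongr
  have hfac : ((n + k)! : ℝ) / ((2 * n + k + 2)! : ℝ) ≤ 1 / ((k : ℝ) + 1) ^ 2 := by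
    rw [div_le_div_iff₀ (fact_pos_real _) (by positivity), one_mul]
    have h1 : ((n + k + 2)! : ℝ) ≤ ((2 * n + k + 2)! : ℝ) := by
      exact_mod_cast Nat.factorial_le (by omega)
    refine le_trans ?_ h1
    simp only [fact_succ_real]
    push_cast
    have := fact_pos_real (n + k)
    rw [mul_comm, ← mul_assoc]
    gcongr
    nlinarith
  have hA := fact_pos_real n
  have hB := fact_pos_real (2 * n + 2)
  have hq : 0 ≤ ((n + k)! : ℝ) / ((2 * n + k + 2)! : ℝ) := by positivity
  have habs : |wzG n k| = (n ! : ℝ) ^ 6 / ((2 * n + 2)! : ℝ) *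
      (((n + k)! : ℝ) / ((2 * n + k + 2)! : ℝ)) ^ 4 * wzP n k := by
    unfold wzG
    rw [mul_div_assoc, mul_assoc, mul_assoc, abs_mul, abs_pow, abs_neg, abs_one, one_pow, one_mul,
      abs_of_nonneg (by positivity), mul_assoc]
  rw [habs]
  calc _ ≤ (n ! : ℝ) ^ 6 / ((2 * n + 2)! : ℝ) * (1 / ((k : ℝ) + 1) ^ 2) ^ 4
          * (wzP n 1 * ((k : ℝ) + 1) ^ 6) := by gcongr
    _ = (n ! : ℝ) ^ 6 / ((2 * n + 2)! : ℝ) * wzP n 1 * (1 / ((k : ℝ) + 1) ^ 2) := by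
        field_simp
    _ ≤ _ := by
        gcongr
        nlinarith

lemma wzG_tendsto (n : ℕ) : Tendsto (wzG n) atTop (𝓝 0) := by
  refine squeeze_zero_norm (wzG_bound n) ?_
  simpa using (tendsto_one_div_add_atTop_nhds_zero_nat (𝕜 := ℝ)).const_mul
    ((n ! : ℝ) ^ 6 / ((2 * n + 2)! : ℝ) * wzP n 1)

/-! ### Telescoping -/

/-- Summation of the WZ relation over `k`: the right-hand side telescopes to `-G n 0`. -/
lemma S_sub (n : ℕ) : wzG n 0 = ∑' k, wzF n k - ∑' k, wzF (n + 1) k := by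
  have h1 := ((wzF_summable (n + 1)).hasSum.sub (wzF_summable n).hasSum).tendsto_sum_nat
  have h2 : ∀ K, ∑ k ∈ Finset.range K, (wzF (n + 1) k - wzF n k) = wzG n K - wzG n 0 := by
    intro K
    simp only [wz_relation]
    exact Finset.sum_range_sub _ _
  simp only [h2] at h1
  have h3 := (wzG_tendsto n).sub_const (wzG n 0)
  have := tendsto_nhds_unique h1 h3
  linarith

lemma S_bound (n : ℕ) :
    |∑' k, wzF n k| ≤ (∑' k : ℕ, 2 * (1 / ((k : ℝ) + 1) ^ 3)) * (5 / 64) ^ n := by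
  rw [mul_comm, ← tsum_mul_left]
  exact tsum_of_norm_bounded (f := wzF n) (summable_cubes.mul_left ((5 / 64) ^ n)).hasSum
    (wzF_bound n)

lemma hasSum_wzG : HasSum (fun n => wzG n 0) (2 * ∑' m : ℕ, 1 / ((m : ℝ) + 1) ^ 3) := by
  have hgeo : Summable (fun n : ℕ => (∑' k : ℕ, 2 * (1 / ((k : ℝ) + 1) ^ 3)) * (5 / 64 : ℝ) ^ n) :=
    (summable_geometric_of_lt_one (by norm_num) (by norm_num)).mul_left _
  have hS : Summable (fun n => ∑' k, wzF n k) := Summable.of_norm_bounded hgeo S_bound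
  have hG : Summable (fun n => wzG n 0) := by
    simp only [S_sub]
    exact hS.sub ((summable_nat_add_iff 1).mpr hS)
  have h0 : ∑' k, wzF 0 k = 2 * ∑' m : ℕ, 1 / ((m : ℝ) + 1) ^ 3 := by
    simp only [wzF_zero]
    rw [tsum_mul_left]
  rw [hG.hasSum_iff_tendsto_nat, ← h0]
  have h2 : ∀ N, ∑ n ∈ Finset.range N, wzG n 0 = ∑' k, wzF 0 k - ∑' k, wzF N k := by
    intro N
    simp only [S_sub]
    exact Finset.sum_range_sub' (fun n => ∑' k, wzF n k) N
  simp only [h2]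
  simpa using hS.tendsto_atTop_zero.const_sub (∑' k, wzF 0 k)

/-! ### The summand in terms of Pochhammer symbols -/

lemma poch_one (k : ℕ) : poch 1 k = (k ! : ℝ) := by
  induction k with
  | zero => simp [poch]
  | succ k ih =>
    unfold poch at *
    rw [Finset.prod_range_succ, ih, fact_succ_real]; ring

/-- The duplication formula `(3/2)_k = (2k+1)! / (4^k k!)`. -/
lemma poch_three_halves (k : ℕ) :
    poch (3 / 2) k * (4 ^ k * (k ! : ℝ)) = ((2 * k + 1)! : ℝ) := by
  induction k with
  | zero => simp [poch]
  | succ k ih =>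
    unfold poch at *
    rw [show 2 * (k + 1) + 1 = 2 * k + 1 + 1 + 1 by ring, Finset.prod_range_succ,
      fact_succ_real (2 * k + 1 + 1), fact_succ_real (2 * k + 1), ← ih, fact_succ_real]
    push_cast
    ring

lemma term_eq (k : ℕ) :
    (-1/1024 : ℝ) ^ k * (poch 1 k) ^ 5 / (poch (3/2) k) ^ 5 *
      (205 * (k : ℝ) ^ 2 + 250 * k + 77) = 32 * wzG k 0 := by
  have ha := (fact_pos_real k).ne'
  have hb := (fact_pos_real (2 * k + 1)).ne'
  have h4 : (4 : ℝ) ^ k ≠ 0 := by positivity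
  have hp : poch (3 / 2) k = ((2 * k + 1)! : ℝ) / (4 ^ k * (k ! : ℝ)) := by
    rw [← poch_three_halves]; field_simp
  have h1024 : (-1 / 1024 : ℝ) ^ k = (-1) ^ k / (4 ^ k) ^ 5 := by
    rw [div_pow, ← pow_mul, mul_comm k 5, pow_mul]; norm_num
  have hP : wzP k ((0 : ℕ) : ℝ) = ((k : ℝ) + 1) ^ 5 * (205 * (k : ℝ) ^ 2 + 250 * k + 77) := by
    simp [wzP]
  unfold wzG
  rw [hp, poch_one, h1024, hP, add_zero, add_zero, fact_succ_real (2 * k + 1)]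
  push_cast
  have e : (2 * (k : ℝ) + 1 + 1) ≠ 0 := by positivity
  generalize (k ! : ℝ) = a at *
  generalize ((2 * k + 1)! : ℝ) = b at *
  generalize (4 : ℝ) ^ k = f at *
  field_simp
  ring

theorem series_apery :
    HasSum
      (fun k : ℕ =>
        (-1/1024 : ℝ) ^ k * (poch 1 k) ^ 5 / (poch (3/2) k) ^ 5 *
          (205 * (k : ℝ) ^ 2 + 250 * k + 77))
      (64 * ∑' m : ℕ, 1 / ((m : ℝ) + 1) ^ 3) := by
  simp only [term_eq]
  have h := hasSum_wzG.mul_left 32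
  rwa [← mul_assoc, show (32 * 2 : ℝ) = 64 by norm_num] at h
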